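/- arXiv:0710.5041 — 2 statements merged into one kernel-verified Lean document; each statement's English description precedes it below -/
import Mathlib

section
/- Let E be a real inner product space of finite dimension n ≥ 1, let B : E → E be a self-adjoint linear operator, and let k, ε be real numbers with 0 ≤ ε ≤ k. Assume ‖B(v) - k·v‖ ≤ ε·‖v‖ for every v ∈ E. Then for every v ∈ E, the 'Ricci' quadratic form Q(v) := (tr B)·⟨B(v), v⟩ - ‖B(v)‖² satisfies n(k-ε)²‖v‖² - (k+ε)²‖v‖² ≤ Q(v) ≤ n(k+ε)²‖v‖² - (k-ε)²‖v‖², and in particular |Q(v) - (n-1)k²‖v‖²| ≤ ((2n+2)kε + (n-1)ε²)·‖v‖². (This is the pointwise estimate showing that an almost-umbilic hypersurface is almost-Einstein, used in the proof of Theorem 3 of the paper, where B is the shape operator and Q(v) = Ric(v,v) by the Gauss equation Ric(Y,Y) = nH⟨B(Y),Y⟩ - ⟨B(Y),B(Y)⟩ with nH = tr B.) -/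
open scoped RealInnerProductSpace

/-- Pointwise estimate showing that an almost-umbilic hypersurface is
almost-Einstein: if the self-adjoint operator `B` (the shape operator) satisfies
`‖B v - k • v‖ ≤ ε ‖v‖` for all `v`, with `0 ≤ ε ≤ k`, then the "Ricci" quadratic
form `Q(v) = (tr B)·⟪B v, v⟫ - ‖B v‖²` (coming from the once-traced Gauss equation)
is pinched around `(n-1)k²‖v‖²`. -/
theorem almost_umbilic_almost_einstein
    {E : Type*} [NormedAddCommGroup E] [InnerProductSpace ℝ E] [FiniteDimensional ℝ E]
    (n : ℕ) (hn : 1 ≤ n) (hdim : Module.finrank ℝ E = n)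
    (B : E →ₗ[ℝ] E) (hB : LinearMap.IsSymmetric B)
    (k ε : ℝ) (hε : 0 ≤ ε) (hεk : ε ≤ k)
    (halmost : ∀ v : E, ‖B v - k • v‖ ≤ ε * ‖v‖) :
    ∀ v : E,
      ((n : ℝ) * (k - ε) ^ 2 * ‖v‖ ^ 2 - (k + ε) ^ 2 * ‖v‖ ^ 2
          ≤ (LinearMap.trace ℝ E B) * ⟪B v, v⟫ - ‖B v‖ ^ 2 ∧
        (LinearMap.trace ℝ E B) * ⟪B v, v⟫ - ‖B v‖ ^ 2
          ≤ (n : ℝ) * (k + ε) ^ 2 * ‖v‖ ^ 2 - (k - ε) ^ 2 * ‖v‖ ^ 2) ∧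
      |(LinearMap.trace ℝ E B) * ⟪B v, v⟫ - ‖B v‖ ^ 2 - ((n : ℝ) - 1) * k ^ 2 * ‖v‖ ^ 2|
        ≤ ((2 * (n : ℝ) + 2) * k * ε + ((n : ℝ) - 1) * ε ^ 2) * ‖v‖ ^ 2 := by
  have hq : ∀ w : E, (k - ε) * ‖w‖ ^ 2 ≤ ⟪w, B w⟫ ∧ ⟪w, B w⟫ ≤ (k + ε) * ‖w‖ ^ 2 := by
    intro w
    have h1 := abs_real_inner_le_norm w (B w - k • w)
    rw [inner_sub_right, inner_smul_right, real_inner_self_eq_norm_sq] at h1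
    have h2 := mul_le_mul_of_nonneg_left (halmost w) (norm_nonneg w)
    have h3 := abs_le.mp (h1.trans h2)
    constructor <;> nlinarith [h3.1, h3.2]
  have htr : (n : ℝ) * (k - ε) ≤ LinearMap.trace ℝ E B ∧
      LinearMap.trace ℝ E B ≤ (n : ℝ) * (k + ε) := by
    have b := stdOrthonormalBasis ℝ E
    rw [LinearMap.trace_eq_sum_inner B b]
    constructor
    · have := Finset.card_nsmul_le_sum Finset.univ (fun i => ⟪b i, B (b i)⟫) (k - ε)
        (fun i _ => by simpa using (hq (b i)).1)
      simpa [hdim] using this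
    · have := Finset.sum_le_card_nsmul Finset.univ (fun i => ⟪b i, B (b i)⟫) (k + ε)
        (fun i _ => by simpa using (hq (b i)).2)
      simpa [hdim, mul_add] using this
  intro v
  have hk : 0 ≤ k := hε.trans hεk
  have hn' : (1 : ℝ) ≤ n := by exact_mod_cast hn
  have hkv : ‖k • v‖ = k * ‖v‖ := by rw [norm_smul, Real.norm_of_nonneg hk]
  have hu : ‖B v‖ ≤ (k + ε) * ‖v‖ := by
    have := norm_le_norm_add_norm_sub' (B v) (k • v)
    linarith [halmost v]
  have hl : (k - ε) * ‖v‖ ≤ ‖B v‖ := by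
    have := norm_le_norm_add_norm_sub (B v) (k • v)
    linarith [halmost v]
  have hu2 : ‖B v‖ ^ 2 ≤ (k + ε) ^ 2 * ‖v‖ ^ 2 := by
    rw [← mul_pow]; exact pow_le_pow_left₀ (norm_nonneg _) hu 2
  have hd : 0 ≤ k - ε := by linarith
  have hl2 : (k - ε) ^ 2 * ‖v‖ ^ 2 ≤ ‖B v‖ ^ 2 := by
    rw [← mul_pow]; exact pow_le_pow_left₀ (by positivity) hl 2
  obtain ⟨q1, q2⟩ := hq v
  rw [real_inner_comm] at q1 q2
  have hq0 : 0 ≤ ⟪B v, v⟫ := le_trans (by positivity) q1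
  have ht0 : 0 ≤ LinearMap.trace ℝ E B := le_trans (by positivity) htr.1
  have p1 := mul_le_mul htr.1 q1 (by positivity) ht0
  have p2 := mul_le_mul htr.2 q2 hq0 (by positivity)
  have L : (n : ℝ) * (k - ε) ^ 2 * ‖v‖ ^ 2 - (k + ε) ^ 2 * ‖v‖ ^ 2
          ≤ (LinearMap.trace ℝ E B) * ⟪B v, v⟫ - ‖B v‖ ^ 2 := by linarith
  have U : (LinearMap.trace ℝ E B) * ⟪B v, v⟫ - ‖B v‖ ^ 2
          ≤ (n : ℝ) * (k + ε) ^ 2 * ‖v‖ ^ 2 - (k - ε) ^ 2 * ‖v‖ ^ 2 := by linarith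
  refine ⟨⟨L, U⟩, abs_le.mpr ⟨?_, ?_⟩⟩
  · have : 0 ≤ ((n : ℝ) - 1) * ε ^ 2 * ‖v‖ ^ 2 :=
      mul_nonneg (mul_nonneg (by linarith) (sq_nonneg _)) (sq_nonneg _)
    linarith
  · linarith
end

section
/- Let n ≥ 2 be a natural number, let B be an n×n real symmetric matrix, and let k be a real number. Set H = tr(B)/n and τ = B - H·I. Then, with ‖·‖_F the Frobenius norm, ‖(tr B)·B - B² - (n-1)·k·I‖_F ≤ (n-2)·|H|·‖τ‖_F + ‖τ‖_F² + (n-1)·√n·|H² - k|. (This is the pointwise estimate, via the identity Ric - (n-1)H²g = (n-2)Hτ - τ², behind the bound ‖Ric - (n-1)k g‖_q ≤ (n-2)‖H‖_∞‖τ‖_{2q} + ‖τ‖²_{2q} + (n-1)√n‖H² - k‖_q in the proof of Theorem 3 of the paper.) -/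
/-- The Frobenius norm of a real square matrix, i.e. the norm associated to
the trace inner product `⟨A, C⟩ = tr(Aᵀ C)`. -/
noncomputable def frobNorm {n : ℕ} (A : Matrix (Fin n) (Fin n) ℝ) : ℝ :=
  Real.sqrt (∑ i, ∑ j, (A i j) ^ 2)

section FrobHelpers

attribute [local instance] Matrix.frobeniusNormedAddCommGroup Matrix.frobeniusNormedSpace

theorem frobNorm_eq_norm {n : ℕ} (A : Matrix (Fin n) (Fin n) ℝ) : frobNorm A = ‖A‖ := by
  rw [Matrix.frobenius_norm_def, frobNorm, Real.sqrt_eq_rpow]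
  simp

theorem frobNorm_add_le {n : ℕ} (A C : Matrix (Fin n) (Fin n) ℝ) :
    frobNorm (A + C) ≤ frobNorm A + frobNorm C := by
  simpa only [frobNorm_eq_norm] using norm_add_le A C

theorem frobNorm_sub_le {n : ℕ} (A C : Matrix (Fin n) (Fin n) ℝ) :
    frobNorm (A - C) ≤ frobNorm A + frobNorm C := by
  simpa only [frobNorm_eq_norm] using norm_sub_le A C

theorem frobNorm_smul {n : ℕ} (c : ℝ) (A : Matrix (Fin n) (Fin n) ℝ) :
    frobNorm (c • A) = |c| * frobNorm A := by
  simpa only [frobNorm_eq_norm, Real.norm_eq_abs] using norm_smul c A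

theorem frobNorm_mul_le {n : ℕ} (A C : Matrix (Fin n) (Fin n) ℝ) :
    frobNorm (A * C) ≤ frobNorm A * frobNorm C := by
  simpa only [frobNorm_eq_norm] using Matrix.frobenius_norm_mul A C

theorem frobNorm_one {n : ℕ} : frobNorm (1 : Matrix (Fin n) (Fin n) ℝ) = Real.sqrt n := by
  simp [frobNorm, Matrix.one_apply]

end FrobHelpers

/-- Pointwise estimate behind the bound
`‖Ric - (n-1)k·g‖_q ≤ (n-2)‖H‖_∞‖τ‖_{2q} + ‖τ‖²_{2q} + (n-1)√n‖H² - k‖_q`: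
for a symmetric matrix `B` with `H = tr(B)/n` and `τ = B - H·I`, the matrix
`(tr B)·B - B² - (n-1)k·I` (representing `Ric - (n-1)k·g` by the Gauss equation)
satisfies the stated Frobenius-norm estimate. -/
theorem frobNorm_ric_sub_einstein_le (n : ℕ) (hn : 2 ≤ n)
    (B : Matrix (Fin n) (Fin n) ℝ) (hB : B.IsSymm) (k : ℝ)
    (H : ℝ) (hH : H = Matrix.trace B / n)
    (τ : Matrix (Fin n) (Fin n) ℝ) (hτ : τ = B - H • (1 : Matrix (Fin n) (Fin n) ℝ)) :
    frobNorm (Matrix.trace B • B - B * B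
        - (((n : ℝ) - 1) * k) • (1 : Matrix (Fin n) (Fin n) ℝ))
      ≤ ((n : ℝ) - 2) * |H| * frobNorm τ + (frobNorm τ) ^ 2
          + ((n : ℝ) - 1) * Real.sqrt n * |H ^ 2 - k| := by
  have hn' : (2 : ℝ) ≤ n := by exact_mod_cast hn
  have htr : Matrix.trace B = n * H := by
    rw [hH]; field_simp
  have hBτ : B = τ + H • (1 : Matrix (Fin n) (Fin n) ℝ) := by rw [hτ]; abel
  have key : Matrix.trace B • B - B * B
        - (((n : ℝ) - 1) * k) • (1 : Matrix (Fin n) (Fin n) ℝ)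
      = ((((n : ℝ) - 2) * H) • τ - τ * τ)
        + (((n : ℝ) - 1) * (H ^ 2 - k)) • (1 : Matrix (Fin n) (Fin n) ℝ) := by
    rw [htr, hBτ]
    simp only [add_mul, mul_add, smul_mul_assoc, mul_smul_comm, one_mul, mul_one]
    module
  have h1 := frobNorm_add_le ((((n : ℝ) - 2) * H) • τ - τ * τ)
    ((((n : ℝ) - 1) * (H ^ 2 - k)) • (1 : Matrix (Fin n) (Fin n) ℝ))
  have h2 := frobNorm_sub_le ((((n : ℝ) - 2) * H) • τ) (τ * τ)
  have h3 := frobNorm_mul_le τ τ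
  rw [frobNorm_smul, frobNorm_one, abs_mul, abs_of_nonneg (by linarith : (0 : ℝ) ≤ n - 1)] at h1
  rw [frobNorm_smul, abs_mul, abs_of_nonneg (by linarith : (0 : ℝ) ≤ n - 2)] at h2
  rw [key]
  linarith
end
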